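/- For n₁ ≥ 1 and n₂ ≥ 1, every f₃ ∈ Y_{n₁,n₂} is a continuous piecewise linear spline function with at most n₁·n₂ + n₁ + n₂ breakpoints; that is, Y_{n₁,n₂} ⊆ Σ_N with N = (n₁+1)(n₂+1) − 1. -/

import Mathlib

/-- The ReLU function `σ(x) = max(x,0)`. -/
noncomputable def relu (x : ℝ) : ℝ := max x 0

/-- `f` belongs to the two-hidden-layer ReLU network class `Y_{n₁,n₂}`. -/
def IsReLU2 (n1 n2 : ℕ) (f : ℝ → ℝ) : Prop :=
  ∃ (a1 b1 : Fin n1 → ℝ) (a2 : Fin n2 → Fin n1 → ℝ) (c2 b2 a3 : Fin n2 → ℝ)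
    (c3 b3 : ℝ),
    ∀ t, f t = c3 * t + b3 +
      ∑ j, a3 j * relu ((∑ k, a2 j k * relu (a1 k * t + b1 k)) + c2 j * t + b2 j)

/-- `f` belongs to the CPL spline class `Σ_N`. -/
def IsCPLSpline (N : ℕ) (f : ℝ → ℝ) : Prop :=
  ∃ (q0 q1 : ℝ) (α x : Fin N → ℝ), StrictMono x ∧
    ∀ t, f t = q1 * t + q0 + ∑ k, α k * relu (t - x k)

/-!
The splines with knots in a fixed set form a vector space, so only the composition with `relu` can
create knots. If `g` is a spline with `m` knots, it is affine on each of `m + 1` consecutive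
intervals, and on each of them `relu ∘ g` acquires at most one new knot, a zero of `g`. Hence a
layer of `n` neurons turns a common knot set of size `m` into one of size at most
`m + n * (m + 1)`: the size plus one is multiplied by at most `n + 1`. Starting from the empty knot
set, two layers give `(n₁ + 1) * (n₂ + 1) - 1`.
-/

open Set
open scoped Finset

/-- The hinge function `t ↦ σ(t - x)` with its kink at `x`. -/
noncomputable def hinge (x : ℝ) : ℝ → ℝ := fun t => relu (t - x)

/-- The vector space of linear splines with knots in `S`, spanned by the affine functions and the
hinge functions at points of `S`. Being a knot of the space does not force an actual kink. -/
noncomputable def splineSpace (S : Set ℝ) : Submodule ℝ (ℝ → ℝ) :=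
  Submodule.span ℝ ({1, id} ∪ hinge '' S)

variable {S T : Set ℝ} {f g h : ℝ → ℝ} {x : ℝ}

lemma relu_of_nonneg (hx : 0 ≤ x) : relu x = x := max_eq_left hx

lemma relu_of_nonpos (hx : x ≤ 0) : relu x = 0 := max_eq_right hx

lemma relu_eq_half_add_abs (x : ℝ) : relu x = (x + |x|) / 2 := by
  rcases le_total 0 x with hx | hx
  · rw [relu_of_nonneg hx, abs_of_nonneg hx]; ring
  · rw [relu_of_nonpos hx, abs_of_nonpos hx]; ring

lemma relu_mul (a x : ℝ) : relu (a * x) = |a| * relu x + (a - |a|) / 2 * x := by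
  simp only [relu_eq_half_add_abs, abs_mul]
  ring

lemma relu_max_sub (t x y : ℝ) : relu (max t x - y) = relu (t - max x y) + (max x y - y) := by
  rw [relu, relu, ← max_sub_sub_right, ← max_add_add_right, sub_add_sub_cancel, zero_add,
    ← max_sub_sub_right, sub_self, max_assoc]

lemma splineSpace_mono (hST : S ⊆ T) : splineSpace S ≤ splineSpace T :=
  Submodule.span_mono (union_subset_union_right _ (image_mono hST))

lemma hinge_mem_splineSpace (hx : x ∈ S) : hinge x ∈ splineSpace S :=
  Submodule.subset_span (.inr (mem_image_of_mem hinge hx))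

lemma affine_mem_splineSpace (a b : ℝ) : (fun t => a * t + b) ∈ splineSpace S := by
  have hid : id ∈ splineSpace S := Submodule.subset_span (by simp)
  have hone : 1 ∈ splineSpace S := Submodule.subset_span (by simp)
  convert add_mem (Submodule.smul_mem _ a hid) (Submodule.smul_mem _ b hone) using 1
  ext t
  simp

lemma affine_add_sum_mem_splineSpace {ι : Type*} [Fintype ι] {φ : ι → ℝ → ℝ}
    (hφ : ∀ i, φ i ∈ splineSpace S) (w : ι → ℝ) (a b : ℝ) :
    (fun t => a * t + b + ∑ i, w i * φ i t) ∈ splineSpace S := by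
  have hsum : ∑ i, w i • φ i ∈ splineSpace S := sum_mem fun i _ => Submodule.smul_mem _ _ (hφ i)
  convert add_mem (affine_mem_splineSpace a b) hsum using 1
  ext t
  simp

lemma mem_splineSpace_insert :
    f ∈ splineSpace (insert x S) ↔ ∃ c : ℝ, ∃ g ∈ splineSpace S, f = c • hinge x + g := by
  rw [splineSpace, image_insert_eq, union_insert, Submodule.mem_span_insert, ← splineSpace]

lemma exists_eq_affine_add_sum_hinge {S : Finset ℝ} (hf : f ∈ splineSpace S) :
    ∃ (a b : ℝ) (α : ℝ → ℝ), ∀ t, f t = a * t + b + ∑ x ∈ S, α x * hinge x t := by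
  rw [splineSpace, Submodule.span_union, Submodule.mem_sup] at hf
  obtain ⟨p, hp, s, hs, rfl⟩ := hf
  obtain ⟨b, a, rfl⟩ := Submodule.mem_span_pair.1 hp
  obtain ⟨α, rfl⟩ := Submodule.mem_span_image_finset_iff_exists_fun' ℝ |>.1 hs
  exact ⟨a, b, α, fun t => by simp [add_comm]⟩

lemma isCPLSpline_of_mem_splineSpace {S : Finset ℝ} (hf : f ∈ splineSpace S) :
    IsCPLSpline #S f := by
  obtain ⟨a, b, α, hf⟩ := exists_eq_affine_add_sum_hinge hf
  let knot := S.orderEmbOfFin rfl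
  have sum_knot (t : ℝ) : ∑ x ∈ S, α x * hinge x t = ∑ k, α (knot k) * hinge (knot k) t := by
    conv_lhs => rw [← S.map_orderEmbOfFin_univ rfl, Finset.sum_map]
    rfl
  exact ⟨b, a, α ∘ knot, knot, knot.strictMono, fun t => (hf t).trans (by rw [sum_knot t]; rfl)⟩

lemma exists_eqOn_Ici_affine (hf : f ∈ splineSpace S) (hx : x ∈ upperBounds S) :
    ∃ a b : ℝ, EqOn f (fun t => a * t + b) (Ici x) := by
  induction hf using Submodule.span_induction with
  | mem f hf =>
    rcases hf with (rfl | rfl) | ⟨y, hy, rfl⟩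
    · exact ⟨0, 1, fun t _ => by simp⟩
    · exact ⟨1, 0, fun t _ => by simp⟩
    · refine ⟨1, -y, fun t (ht : x ≤ t) => ?_⟩
      rw [hinge, relu_of_nonneg (sub_nonneg.2 ((hx hy).trans ht))]
      ring
  | zero => exact ⟨0, 0, fun t _ => by simp⟩
  | add f g _ _ hf hg =>
    obtain ⟨a, b, hf⟩ := hf
    obtain ⟨c, d, hg⟩ := hg
    refine ⟨a + c, b + d, fun t ht => ?_⟩
    rw [Pi.add_apply, hf ht, hg ht]
    ring
  | smul c f _ hf =>
    obtain ⟨a, b, hf⟩ := hf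
    refine ⟨c * a, c * b, fun t ht => ?_⟩
    rw [Pi.smul_apply, hf ht, smul_eq_mul]
    ring

lemma comp_max_mem_splineSpace (hf : f ∈ splineSpace S) (x : ℝ) :
    (fun t => f (max t x)) ∈ splineSpace (insert x S) := by
  have hinge_add_const {y : ℝ} (hy : y ∈ insert x S) (c : ℝ) :
      (fun t => hinge y t + c) ∈ splineSpace (insert x S) := by
    simpa [Pi.add_def] using add_mem (hinge_mem_splineSpace hy) (affine_mem_splineSpace 0 c)
  induction hf using Submodule.span_induction with
  | mem f hf =>
    rcases hf with (rfl | rfl) | ⟨y, hy, rfl⟩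
    · simpa using affine_mem_splineSpace (S := insert x S) 0 1
    · simpa [hinge, relu, ← max_add_add_right] using hinge_add_const (mem_insert x S) x
    · have hxy : max x y ∈ insert x S := by
        rcases max_choice x y with h | h <;> simp [h, hy]
      simpa only [hinge, relu_max_sub] using hinge_add_const hxy (max x y - y)
  | zero => exact zero_mem _
  | add f g _ _ hf hg => exact add_mem hf hg
  | smul c f _ hf => exact Submodule.smul_mem _ c hf

lemma mem_splineSpace_of_eqOn_Iic_Ici (hg : g ∈ splineSpace S) (hh : h ∈ splineSpace T)
    (hfg : EqOn f g (Iic x)) (hfh : EqOn f h (Ici x)) :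
    f ∈ splineSpace (insert x (S ∪ T)) := by
  have hg' : g ∈ splineSpace (S ∪ T) := splineSpace_mono subset_union_left hg
  have hh' : h ∈ splineSpace (S ∪ T) := splineSpace_mono subset_union_right hh
  have hgx : f x = g x := hfg self_mem_Iic
  have hhx : f x = h x := hfh self_mem_Ici
  -- The gluing formula `f = g + (h - g) ∘ (max · x)`.
  convert add_mem (splineSpace_mono (subset_insert x _) hg')
    (comp_max_mem_splineSpace (sub_mem hh' hg') x) using 1
  ext t
  rcases le_total t x with ht | ht
  · simp [max_eq_right ht, hfg ht, ← hgx, ← hhx]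
  · simp [max_eq_left ht, hfh ht]

lemma exists_relu_affine_mem_splineSpace (a b : ℝ) :
    ∃ z, (fun t => relu (a * t + b)) ∈ splineSpace {z} := by
  rcases eq_or_ne a 0 with rfl | ha
  · exact ⟨0, by simpa using affine_mem_splineSpace 0 (relu b)⟩
  · refine ⟨-b / a, ?_⟩
    convert add_mem (Submodule.smul_mem _ |a| (hinge_mem_splineSpace (mem_singleton (-b / a))))
      (affine_mem_splineSpace ((a - |a|) / 2) ((a - |a|) / 2 * (b / a))) using 1
    ext t
    have factor : a * t + b = a * (t - -b / a) := by field_simp; ring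
    simp only [factor, relu_mul, Pi.add_apply, Pi.smul_apply, smul_eq_mul, hinge]
    ring

lemma exists_relu_comp_mem_splineSpace {S : Finset ℝ} (hg : g ∈ splineSpace S) :
    ∃ Z : Finset ℝ, #Z ≤ #S + 1 ∧ relu ∘ g ∈ splineSpace (S ∪ Z) := by
  classical
  induction S using Finset.induction_on_max generalizing g with
  | empty =>
    obtain ⟨a, b, _, hgab⟩ := exists_eq_affine_add_sum_hinge hg
    obtain ⟨z, hz⟩ := exists_relu_affine_mem_splineSpace a b
    obtain rfl : g = fun t => a * t + b := funext fun t => by simpa using hgab t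
    exact ⟨{z}, by simp, by simpa [Function.comp_def] using hz⟩
  | insert x S hx ih =>
    obtain ⟨a, b, hright⟩ := exists_eqOn_Ici_affine hg (x := x)
      (by simpa [upperBounds] using fun y hy => (hx y hy).le)
    rw [Finset.coe_insert] at hg
    obtain ⟨c, g', hg', rfl⟩ := mem_splineSpace_insert.1 hg
    have hleft : EqOn (c • hinge x + g') g' (Iic x) := fun t (ht : t ≤ x) => by
      simp [hinge, relu_of_nonpos (sub_nonpos.2 ht)]
    obtain ⟨Z, hZ, hreluLeft⟩ := ih hg'
    obtain ⟨z, hreluRight⟩ := exists_relu_affine_mem_splineSpace a b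
    refine ⟨insert z Z, ?_, ?_⟩
    · rw [Finset.card_insert_of_notMem fun hxS => (hx x hxS).false]
      exact (Finset.card_insert_le z Z).trans (by gcongr)
    · refine splineSpace_mono (fun y => ?_) (mem_splineSpace_of_eqOn_Iic_Ici hreluLeft hreluRight
        hleft.comp_left hright.comp_left)
      simp only [Finset.coe_insert, mem_insert_iff, mem_union, mem_singleton_iff]
      tauto

lemma exists_relu_layer_mem_splineSpace {ι : Type*} [Fintype ι] {S : Finset ℝ} {g : ι → ℝ → ℝ}
    (hg : ∀ i, g i ∈ splineSpace S) :
    ∃ T : Finset ℝ, #T + 1 ≤ (Fintype.card ι + 1) * (#S + 1) ∧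
      ∀ i, relu ∘ g i ∈ splineSpace T := by
  classical
  choose Z hZ hmem using fun i => exists_relu_comp_mem_splineSpace (hg i)
  refine ⟨S ∪ Finset.univ.biUnion Z, ?_, fun i => splineSpace_mono ?_ (hmem i)⟩
  · calc #(S ∪ Finset.univ.biUnion Z) + 1
        ≤ #S + Fintype.card ι * (#S + 1) + 1 := by
          gcongr
          exact (Finset.card_union_le _ _).trans
            (by gcongr; exact Finset.card_biUnion_le_card_mul Finset.univ Z _ fun i _ => hZ i)
      _ = (Fintype.card ι + 1) * (#S + 1) := by ring
  · rw [Finset.coe_union]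
    exact union_subset_union_right _ (mod_cast Finset.subset_biUnion_of_mem Z (Finset.mem_univ i))

/-- `Y_{n₁,n₂} ⊆ Σ_N` with `N = (n₁+1)(n₂+1) − 1`. -/
theorem two_layer_subset_spline (n1 n2 : ℕ) (hn1 : 1 ≤ n1) (hn2 : 1 ≤ n2)
    (f : ℝ → ℝ) (hf : IsReLU2 n1 n2 f) :
    ∃ N, N ≤ (n1 + 1) * (n2 + 1) - 1 ∧ IsCPLSpline N f := by
  obtain ⟨a1, b1, a2, c2, b2, a3, c3, b3, hf⟩ := hf
  obtain ⟨S, hS, hfirst⟩ := exists_relu_layer_mem_splineSpace (S := ∅)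
    fun k => affine_mem_splineSpace (a1 k) (b1 k)
  obtain ⟨T, hT, hsecond⟩ := exists_relu_layer_mem_splineSpace
    fun j => affine_add_sum_mem_splineSpace hfirst (a2 j) (c2 j) (b2 j)
  have hcard : #T + 1 ≤ (n1 + 1) * (n2 + 1) := by
    simp only [Fintype.card_fin, Finset.card_empty, zero_add, mul_one] at hS hT
    calc #T + 1 ≤ (n2 + 1) * (#S + 1) := hT
      _ ≤ (n2 + 1) * (n1 + 1) := by gcongr
      _ = (n1 + 1) * (n2 + 1) := mul_comm _ _
  have hmem : f ∈ splineSpace T := by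
    convert affine_add_sum_mem_splineSpace hsecond a3 c3 b3 using 1
    ext t
    rw [hf t]
    simp only [Function.comp_apply, add_assoc, add_comm]
  exact ⟨#T, Nat.le_sub_one_of_lt hcard, isCPLSpline_of_mem_splineSpace hmem⟩
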